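/- arXiv:1401.6843 — 2 statements merged into one kernel-verified Lean document; each statement's English description precedes it below -/
import Mathlib

section
/- The n² elements e_{2i,j} (1 ≤ i ≤ n²/2, j ∈ {0,1}) form a complete set of primitive orthogonal idempotents of the subalgebra u⁰ of u generated by K and K̂: each e_{2i,j} is a nonzero idempotent, e_{2i,j}·e_{2i',j'} = 0 whenever (i,j) ≠ (i',j'), the sum of all e_{2i,j} equals 1, and no e_{2i,j} can be written as a sum of two nonzero orthogonal idempotents of u⁰. -/
noncomputable section

open scoped TensorProduct

namespace QFL

/-- The defining relations of the quasi-Frobenius-Lusztig kernel `ũ_q(sl₂)`,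
on the free algebra on four generators `K = ι 0`, `K̂ = ι 1`, `E = ι 2`, `F = ι 3`. -/
inductive Rel (k : Type) [Field k] (n : ℕ) (q : k) :
    FreeAlgebra k (Fin 4) → FreeAlgebra k (Fin 4) → Prop
  | Kord : Rel k n q (FreeAlgebra.ι k (0 : Fin 4) ^ n) 1
  | Khord : Rel k n q (FreeAlgebra.ι k (1 : Fin 4) ^ n)
      ((FreeAlgebra.ι k (0 : Fin 4) ^ (n - 1)) ^ 2)
  | KKh : Rel k n q (FreeAlgebra.ι k (0 : Fin 4) * FreeAlgebra.ι k (1 : Fin 4))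
      (FreeAlgebra.ι k (1 : Fin 4) * FreeAlgebra.ι k (0 : Fin 4))
  | KE : Rel k n q
      (FreeAlgebra.ι k (0 : Fin 4) * FreeAlgebra.ι k (2 : Fin 4) *
        FreeAlgebra.ι k (0 : Fin 4) ^ (n - 1))
      (q ^ n • FreeAlgebra.ι k (2 : Fin 4))
  | KF : Rel k n q
      (FreeAlgebra.ι k (0 : Fin 4) * FreeAlgebra.ι k (3 : Fin 4) *
        FreeAlgebra.ι k (0 : Fin 4) ^ (n - 1))
      ((q ^ n)⁻¹ • FreeAlgebra.ι k (3 : Fin 4))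
  | KhE : Rel k n q
      (FreeAlgebra.ι k (1 : Fin 4) * FreeAlgebra.ι k (2 : Fin 4) *
        FreeAlgebra.ι k (1 : Fin 4) ^ (n ^ 2 - 1))
      ((q ^ n * (q ^ 2)⁻¹) • FreeAlgebra.ι k (2 : Fin 4))
  | KhF : Rel k n q
      (FreeAlgebra.ι k (1 : Fin 4) * FreeAlgebra.ι k (3 : Fin 4) *
        FreeAlgebra.ι k (1 : Fin 4) ^ (n ^ 2 - 1))
      (((q ^ n)⁻¹ * q ^ 2) • FreeAlgebra.ι k (3 : Fin 4))
  | Enil : Rel k n q (FreeAlgebra.ι k (2 : Fin 4) ^ n ^ 2) 0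
  | Fnil : Rel k n q (FreeAlgebra.ι k (3 : Fin 4) ^ n ^ 2) 0
  | EF : Rel k n q
      (FreeAlgebra.ι k (3 : Fin 4) * FreeAlgebra.ι k (2 : Fin 4) -
        q⁻¹ • (FreeAlgebra.ι k (2 : Fin 4) * FreeAlgebra.ι k (3 : Fin 4)))
      (1 - FreeAlgebra.ι k (0 : Fin 4) ^ (n - 1) * FreeAlgebra.ι k (1 : Fin 4))

/-- The algebra `ũ_q(sl₂)` as the quotient of the free algebra by the defining relations. -/
abbrev U (k : Type) [Field k] (n : ℕ) (q : k) := RingQuot (Rel k n q)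

variable (k : Type) [Field k] (n : ℕ) (q : k)

def K : U k n q := RingQuot.mkAlgHom k (Rel k n q) (FreeAlgebra.ι k (0 : Fin 4))
def Kh : U k n q := RingQuot.mkAlgHom k (Rel k n q) (FreeAlgebra.ι k (1 : Fin 4))
def E : U k n q := RingQuot.mkAlgHom k (Rel k n q) (FreeAlgebra.ι k (2 : Fin 4))
def F : U k n q := RingQuot.mkAlgHom k (Rel k n q) (FreeAlgebra.ι k (3 : Fin 4))

/-- `K⁻¹ = K^(n-1)`. -/
def Kinv : U k n q := K k n q ^ (n - 1)
/-- `K̂⁻¹ = K̂^(n²-1)`. -/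
def Khinv : U k n q := Kh k n q ^ (n ^ 2 - 1)

/-- `φ_{2i} = (2/n²) Σ_{t<n²/2} q^{-2it} (K⁻¹K̂)^t`. -/
def phi (i : ℕ) : U k n q :=
  ((n ^ 2 : k)⁻¹ * 2) • ∑ t ∈ Finset.range (n ^ 2 / 2),
    (q⁻¹ ^ (2 * i * t)) • (Kinv k n q * Kh k n q) ^ t

/-- `𝟙₀ = (1/2)(1 + KK̂^(n/2))` and `𝟙₁ = (1/2)(1 - KK̂^(n/2))`. -/
def oneJ (j : ℕ) : U k n q :=
  if j = 0 then (2 : k)⁻¹ • (1 + K k n q * Kh k n q ^ (n / 2))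
  else (2 : k)⁻¹ • (1 - K k n q * Kh k n q ^ (n / 2))

/-- The idempotent `e_{2i,j} = φ_{2i} 𝟙_j`. -/
def eIdem (i j : ℕ) : U k n q := phi k n q i * oneJ k n q j

/-- `α_{2i,j} = F^(n²-1) e_{2i,j}`. -/
def alpha (i j : ℕ) : U k n q := F k n q ^ (n ^ 2 - 1) * eIdem k n q i j

/-- `β_{2i,j} = E^(2i-2) α_{2i,j}`. -/
def beta (i j : ℕ) : U k n q := E k n q ^ (2 * i - 2) * alpha k n q i j

/-- The Gaussian number `s_q = 1 + q + ⋯ + q^(s-1)`. -/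
def gauss (x : k) (s : ℕ) : k := ∑ t ∈ Finset.range s, x ^ t

/-- The span of the PBW-type monomials `F^a K^c K̂^d E^b` with `a ≤ n²-2`, `b ≤ n²-1`,
`c ≤ n-1`, `d ≤ n²-1`. -/
def pbw : Submodule k (U k n q) :=
  Submodule.span k {x | ∃ a b c d : ℕ, a ≤ n ^ 2 - 2 ∧ b ≤ n ^ 2 - 1 ∧ c ≤ n - 1 ∧
    d ≤ n ^ 2 - 1 ∧ x = F k n q ^ a * K k n q ^ c * Kh k n q ^ d * E k n q ^ b}

/-- `γ_{2i,j}`: the unique element of the PBW span with `F·γ = β_{2i,j}`. -/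
def gam (i j : ℕ) : U k n q :=
  @dite _ (∃! x, x ∈ pbw k n q ∧ F k n q * x = beta k n q i j)
    (Classical.propDecidable _) (fun h => h.choose) (fun _ => 0)

/-- The left ideal `P_{2i,j} = u·γ_{2i,j}`. -/
def P (i j : ℕ) : Submodule (U k n q) (U k n q) :=
  Submodule.span (U k n q) {gam k n q i j}

/-- `S_{2i,j} = Soc(P_{2i,j})`, the sum of all simple submodules of `P_{2i,j}`. -/
def S (i j : ℕ) : Submodule (U k n q) (U k n q) :=
  sSup {N : Submodule (U k n q) (U k n q) | N ≤ P k n q i j ∧ IsSimpleModule (U k n q) N}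

end QFL

/-!
The commuting elements `g = K⁻¹K̂` and `s = KK̂^(n/2)` satisfy `g^(n²/2) = 1` and `s² = 1`, and
`e_{2i,j}` is the projection onto their joint eigenspace with eigenvalues `q^(2i)` and `(-1)^j`.
Such projections for the characters of `C_{n²/2} × C₂` are orthogonal idempotents with sum `1`.
Because `4 ∣ n`, the power `g^(n²/4)` equals `K^(n/2)`, which lets one recover `K` and `K̂` from `g`
and `s`. So all of `u⁰` acts on `e_{2i,j}` by scalars, and a splitting of `e_{2i,j}` into orthogonal
idempotents of `u⁰` is trivial.

That `e_{2i,j} ≠ 0` is seen in a Verma module, truncated so that `E` and `F` become nilpotent: the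
basis vectors are weight vectors, and for the highest weight `K = K̂ = (-1)^(i+j)` the `i`-th one is
fixed by `e_{2i,j}`.
-/

section EigenProjection

variable {k A B : Type*} [Field k] [Ring A] [Algebra k A] [Ring B] [Algebra k B]
variable {N M : ℕ} {g h x : A} {c d c' d' : k}

/-- The projection onto the `c`-eigenspace of an element `g` with `g ^ N = 1`, where `c ^ N = 1`,
written as a polynomial in `g`. -/
def eigenProj (N : ℕ) (g : A) (c : k) : A :=
  (N : k)⁻¹ • ∑ t ∈ Finset.range N, (c⁻¹ • g) ^ t

theorem map_eigenProj (f : A →ₐ[k] B) (N : ℕ) (g : A) (c : k) :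
    f (eigenProj N g c) = eigenProj N (f g) c := by
  simp [eigenProj]

theorem eigenProj_two_one (g : A) : eigenProj 2 g (1 : k) = (2 : k)⁻¹ • (1 + g) := by
  simp [eigenProj, Finset.sum_range_succ]

theorem eigenProj_two_neg_one (g : A) : eigenProj 2 g (-1 : k) = (2 : k)⁻¹ • (1 - g) := by
  simp [eigenProj, Finset.sum_range_succ, inv_neg, sub_eq_add_neg]

theorem eigenProj_mem (S : Subalgebra k A) (hg : g ∈ S) (N : ℕ) (c : k) : eigenProj N g c ∈ S :=
  S.smul_mem (S.sum_mem fun _ _ => S.pow_mem (S.smul_mem hg _) _) _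

theorem commute_eigenProj_right (hxg : Commute x g) (N : ℕ) (c : k) :
    Commute x (eigenProj N g c) :=
  (Commute.sum_right _ _ _ fun t _ => (hxg.smul_right c⁻¹).pow_right t).smul_right _

theorem pow_mul_eq_smul_of_mul_eq_smul (hx : g * x = c • x) (t : ℕ) : g ^ t * x = c ^ t • x := by
  induction t with
  | zero => simp
  | succ t ih => rw [pow_succ', mul_assoc, ih, mul_smul_comm, hx, smul_smul, pow_succ]

theorem eigenProj_mul_of_mul_eq_smul (hx : g * x = c • x) (N : ℕ) (d : k) :
    eigenProj N g d * x = eigenProj N c d • x := by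
  simp only [eigenProj, smul_mul_assoc, Finset.sum_mul, smul_assoc, Finset.sum_smul, smul_pow,
    pow_mul_eq_smul_of_mul_eq_smul hx]

theorem mul_eigenProj (hg : g ^ N = 1) (hc : c ^ N = 1) :
    g * eigenProj N g c = c • eigenProj N g c := by
  obtain rfl | hN := eq_or_ne N 0
  · simp [eigenProj]
  have hc0 : c ≠ 0 := (IsUnit.of_pow_eq_one hc hN).ne_zero
  have hpow : (c⁻¹ • g) ^ N = 1 := by rw [smul_pow, inv_pow, hc, hg, inv_one, one_smul]
  have hfix : (c⁻¹ • g) * eigenProj N g c = eigenProj N g c := by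
    rw [← sub_eq_zero, ← sub_one_mul, eigenProj, mul_smul_comm, mul_geom_sum, hpow, sub_self,
      smul_zero]
  rw [smul_mul_assoc] at hfix
  rw [← smul_inv_smul₀ hc0 (g * _), hfix]

theorem eigenProj_self (hN : (N : k) ≠ 0) (hc : c ≠ 0) : eigenProj N c c = 1 := by
  simp [eigenProj, hc, hN]

theorem eigenProj_of_ne (hc : c ^ N = 1) (hd : d ^ N = 1) (hcd : c ≠ d) : eigenProj N c d = 0 := by
  have hmul : (c - d) * eigenProj N c d = 0 := by
    rw [sub_mul, sub_eq_zero, mul_eigenProj hc hd, smul_eq_mul]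
  exact (mul_eq_zero.mp hmul).resolve_left (sub_ne_zero.mpr hcd)

theorem isIdempotentElem_eigenProj (hN : (N : k) ≠ 0) (hg : g ^ N = 1) (hc : c ^ N = 1) :
    IsIdempotentElem (eigenProj N g c) := by
  have hc0 : c ≠ 0 := (IsUnit.of_pow_eq_one hc (by rintro rfl; simp at hN)).ne_zero
  rw [IsIdempotentElem, eigenProj_mul_of_mul_eq_smul (mul_eigenProj hg hc), eigenProj_self hN hc0,
    one_smul]

theorem eigenProj_mul_eigenProj_of_ne (hg : g ^ N = 1) (hc : c ^ N = 1) (hd : d ^ N = 1)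
    (hcd : c ≠ d) : eigenProj N g c * eigenProj N g d = 0 := by
  rw [eigenProj_mul_of_mul_eq_smul (mul_eigenProj hg hd), eigenProj_of_ne hd hc hcd.symm, zero_smul]

theorem sum_Ico_pow_eq_zero (hc : c ^ N = 1) (hc1 : c ≠ 1) (a : ℕ) :
    ∑ i ∈ Finset.Ico a (a + N), c ^ i = 0 := by
  rw [Finset.sum_Ico_eq_sum_range, add_tsub_cancel_left]
  simp_rw [pow_add, ← Finset.mul_sum]
  rw [geom_sum_eq hc1, hc, sub_self, zero_div, mul_zero]

theorem sum_Ico_eigenProj {ζ : k} (hζ : IsPrimitiveRoot ζ N) (hN : (N : k) ≠ 0) (g : A) (a : ℕ) :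
    ∑ i ∈ Finset.Ico a (a + N), eigenProj N g (ζ ^ i) = 1 := by
  have hN0 : 0 < N := Nat.pos_of_ne_zero (by rintro rfl; simp at hN)
  have hcoeff : ∀ t ∈ Finset.range N,
      ∑ i ∈ Finset.Ico a (a + N), ((ζ ^ i)⁻¹ • g) ^ t =
        if t = 0 then (N : k) • (1 : A) else 0 := by
    intro t ht
    split_ifs with h
    · simp [h, Nat.cast_smul_eq_nsmul]
    have hne : ζ⁻¹ ^ t ≠ 1 := hζ.inv.pow_ne_one_of_pos_of_lt h (Finset.mem_range.mp ht)
    have hpow : (ζ⁻¹ ^ t) ^ N = 1 := by rw [pow_right_comm, hζ.inv.pow_eq_one, one_pow]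
    simp_rw [smul_pow, ← inv_pow, pow_right_comm _ _ t]
    rw [← Finset.sum_smul, sum_Ico_pow_eq_zero hpow hne, zero_smul]
  simp_rw [eigenProj]
  rw [← Finset.smul_sum, Finset.sum_comm, Finset.sum_congr rfl hcoeff]
  simp [hN0, hN]

/-- The projection onto the joint eigenspace of `g` and `h` with eigenvalues `c` and `d`, for
commuting elements with `g ^ N = 1` and `h ^ M = 1`. -/
def jointEigenProj (N M : ℕ) (g h : A) (c d : k) : A :=
  eigenProj N g c * eigenProj M h d

theorem map_jointEigenProj (f : A →ₐ[k] B) (N M : ℕ) (g h : A) (c d : k) :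
    f (jointEigenProj N M g h c d) = jointEigenProj N M (f g) (f h) c d := by
  simp [jointEigenProj, map_eigenProj]

theorem jointEigenProj_mem (S : Subalgebra k A) (hg : g ∈ S) (hh : h ∈ S) (N M : ℕ) (c d : k) :
    jointEigenProj N M g h c d ∈ S :=
  S.mul_mem (eigenProj_mem S hg N c) (eigenProj_mem S hh M d)

theorem jointEigenProj_self (hN : (N : k) ≠ 0) (hM : (M : k) ≠ 0) (hc : c ≠ 0) (hd : d ≠ 0) :
    jointEigenProj N M c d c d = 1 := by
  rw [jointEigenProj, eigenProj_self hN hc, eigenProj_self hM hd, one_mul]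

theorem commute_eigenProj_eigenProj (hgh : Commute g h) (N M : ℕ) (c d : k) :
    Commute (eigenProj N g c) (eigenProj M h d) :=
  (commute_eigenProj_right (commute_eigenProj_right hgh M d).symm N c).symm

theorem fst_mul_jointEigenProj (hg : g ^ N = 1) (hc : c ^ N = 1) (M : ℕ) (h : A) (d : k) :
    g * jointEigenProj N M g h c d = c • jointEigenProj N M g h c d := by
  rw [jointEigenProj, ← mul_assoc, mul_eigenProj hg hc, smul_mul_assoc]

theorem snd_mul_jointEigenProj (hgh : Commute g h) (hh : h ^ M = 1) (hd : d ^ M = 1) (N : ℕ)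
    (c : k) : h * jointEigenProj N M g h c d = d • jointEigenProj N M g h c d := by
  rw [jointEigenProj, (commute_eigenProj_eigenProj hgh N M c d).eq, ← mul_assoc,
    mul_eigenProj hh hd, smul_mul_assoc]

theorem isIdempotentElem_jointEigenProj (hgh : Commute g h) (hN : (N : k) ≠ 0) (hM : (M : k) ≠ 0)
    (hg : g ^ N = 1) (hh : h ^ M = 1) (hc : c ^ N = 1) (hd : d ^ M = 1) :
    IsIdempotentElem (jointEigenProj N M g h c d) :=
  (isIdempotentElem_eigenProj hN hg hc).mul_of_commute (commute_eigenProj_eigenProj hgh N M c d)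
    (isIdempotentElem_eigenProj hM hh hd)

theorem jointEigenProj_mul_jointEigenProj_of_ne (hgh : Commute g h) (hg : g ^ N = 1)
    (hh : h ^ M = 1) (hc : c ^ N = 1) (hd : d ^ M = 1) (hc' : c' ^ N = 1) (hd' : d' ^ M = 1)
    (hne : c ≠ c' ∨ d ≠ d') :
    jointEigenProj N M g h c d * jointEigenProj N M g h c' d' = 0 := by
  rw [jointEigenProj, jointEigenProj,
    (commute_eigenProj_eigenProj hgh N M c' d).symm.mul_mul_mul_comm]
  obtain hcc' | hdd' := hne
  · rw [eigenProj_mul_eigenProj_of_ne hg hc hc' hcc', zero_mul]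
  · rw [eigenProj_mul_eigenProj_of_ne hh hd hd' hdd', mul_zero]

theorem sum_Ico_jointEigenProj {ζ ω : k} (hζ : IsPrimitiveRoot ζ N) (hω : IsPrimitiveRoot ω M)
    (hN : (N : k) ≠ 0) (hM : (M : k) ≠ 0) (g h : A) (a b : ℕ) :
    ∑ i ∈ Finset.Ico a (a + N), ∑ j ∈ Finset.Ico b (b + M),
      jointEigenProj N M g h (ζ ^ i) (ω ^ j) = 1 := by
  simp only [jointEigenProj]
  rw [← Finset.sum_mul_sum, sum_Ico_eigenProj hζ hN, sum_Ico_eigenProj hω hM, one_mul]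

end EigenProjection

section PrimitiveRoot

variable {k : Type*} [Field k] {q : k} {N : ℕ}

theorem natCast_ne_zero_of_dvd (hq : IsPrimitiveRoot q N) (hN : N ≠ 0) {d : ℕ} (hd : d ∣ N) :
    (d : k) ≠ 0 :=
  have : NeZero N := ⟨hN⟩
  ne_zero_of_dvd_ne_zero hq.neZero'.out (Nat.cast_dvd_cast hd)

theorem pow_half_eq_neg_one (hq : IsPrimitiveRoot q N) (hN : N ≠ 0) (h2 : 2 ∣ N) :
    q ^ (N / 2) = -1 :=
  (hq.pow hN.pos (Nat.div_mul_cancel h2).symm).eq_neg_one_of_two_right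

theorem isPrimitiveRoot_neg_one (hq : IsPrimitiveRoot q N) (hN : N ≠ 0) (h2 : 2 ∣ N) :
    IsPrimitiveRoot (-1 : k) 2 := by
  rw [← pow_half_eq_neg_one hq hN h2]
  exact hq.pow hN.pos (Nat.div_mul_cancel h2).symm

end PrimitiveRoot

theorem pow_pow_eq_one {G : Type*} [Monoid G] {a : G} {N : ℕ} (ha : a ^ N = 1) (i : ℕ) :
    (a ^ i) ^ N = 1 := by
  rw [pow_right_comm, ha, one_pow]

theorem injOn_pow_Ico_of_isPrimitiveRoot {G : Type*} [CommMonoid G] {ζ : G} {N : ℕ}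
    (hζ : IsPrimitiveRoot ζ N) (a : ℕ) : Set.InjOn (ζ ^ ·) (Set.Ico a (a + N)) := by
  rintro i ⟨hi, hi'⟩ j ⟨hj, hj'⟩ (hij : ζ ^ i = ζ ^ j)
  have hmod : i ≡ j [MOD N] := by
    rwa [hζ.eq_orderOf, ← (hζ.isOfFinOrder (by lia)).pow_eq_pow_iff_modEq]
  exact hmod.eq_of_abs_lt (by rw [abs_lt]; lia)

section Indecomposable

variable {k A : Type*} [Field k] [Ring A] [Algebra k A]

/-- `e` is not the sum of two nonzero orthogonal idempotents of the subalgebra `S`: the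
indecomposability part of being a primitive idempotent of `S`. -/
def IsIndecomposableIn (S : Subalgebra k A) (e : A) : Prop :=
  ¬ ∃ a b : A, a ∈ S ∧ b ∈ S ∧ a ≠ 0 ∧ b ≠ 0 ∧
    a * a = a ∧ b * b = b ∧ a * b = 0 ∧ b * a = 0 ∧ e = a + b

theorem isIndecomposableIn_of_mul_eq_smul {S : Subalgebra k A} {e : A}
    (hS : ∀ x ∈ S, ∃ c : k, x * e = c • e) : IsIndecomposableIn S e := by
  rintro ⟨a, b, ha, -, ha0, hb0, haa, hbb, hab, hba, rfl⟩
  obtain ⟨c, hc⟩ := hS a ha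
  have hac : a = c • (a + b) := by rw [← hc, mul_add, haa, hab, add_zero]
  have hbc : c • b = 0 := by
    rw [← hba]
    conv_rhs => rw [hac]
    rw [mul_smul_comm, mul_add, hba, hbb, zero_add]
  obtain rfl : c = 0 := (smul_eq_zero.mp hbc).resolve_right hb0
  exact ha0 (by rw [hac, zero_smul])

theorem exists_mul_eq_smul_of_mem_adjoin {s : Set A} {e : A} (hs : ∀ x ∈ s, ∃ c : k, x * e = c • e)
    {x : A} (hx : x ∈ Algebra.adjoin k s) : ∃ c : k, x * e = c • e := by
  induction hx using Algebra.adjoin_induction with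
  | mem x hx => exact hs x hx
  | algebraMap r => exact ⟨r, (Algebra.smul_def r e).symm⟩
  | add x y _ _ hx hy =>
    obtain ⟨c, hc⟩ := hx
    obtain ⟨d, hd⟩ := hy
    exact ⟨c + d, by rw [add_mul, hc, hd, add_smul]⟩
  | mul x y _ _ hx hy =>
    obtain ⟨c, hc⟩ := hx
    obtain ⟨d, hd⟩ := hy
    exact ⟨d * c, by rw [mul_assoc, hd, mul_smul_comm, hc, smul_smul]⟩

theorem isIndecomposableIn_adjoin {s : Set A} {e : A} (hs : ∀ x ∈ s, ∃ c : k, x * e = c • e) :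
    IsIndecomposableIn (Algebra.adjoin k s) e :=
  isIndecomposableIn_of_mul_eq_smul fun _ => exists_mul_eq_smul_of_mem_adjoin hs

end Indecomposable

section WeightedShift

variable {R G : Type*} [CommSemiring R] [AddCommMonoid G]

/-- The weighted shift `f ↦ (m ↦ w m * f (m + d))` on functions on `G`. -/
def weightedShift (w : G → R) (d : G) : Module.End R (G → R) where
  toFun f m := w m * f (m + d)
  map_add' f g := by ext m; simp [mul_add]
  map_smul' c f := by ext m; simp [mul_left_comm]

theorem weightedShift_apply (w : G → R) (d : G) (f : G → R) (m : G) :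
    weightedShift w d f m = w m * f (m + d) :=
  rfl

theorem weightedShift_pow_apply (w : G → R) (d : G) (r : ℕ) (f : G → R) (m : G) :
    (weightedShift w d ^ r) f m = (∏ s ∈ Finset.range r, w (m + s • d)) * f (m + r • d) := by
  induction r generalizing f with
  | zero => simp
  | succ r ih =>
    rw [pow_succ, Module.End.mul_apply, ih, weightedShift_apply, Finset.prod_range_succ, mul_assoc,
      add_assoc, succ_nsmul]

theorem weightedShift_pow_eq_zero {w : G → R} {d : G} {r : ℕ}
    (hw : ∀ m, ∃ s < r, w (m + s • d) = 0) : weightedShift w d ^ r = 0 := by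
  ext f m
  obtain ⟨s, hs, hws⟩ := hw m
  rw [LinearMap.zero_apply, weightedShift_pow_apply,
    Finset.prod_eq_zero (Finset.mem_range.mpr hs) hws, zero_mul, Pi.zero_apply]

end WeightedShift

namespace QFL

section ToralPair

variable {M M' : Type*} [Monoid M] [Monoid M'] {n : ℕ} {a b : M}

/-- The relations satisfied by the generators `K`, `K̂` of `u⁰`. They force `a ^ (n - 1)` to be the
inverse of `a`. -/
structure IsToralPair (n : ℕ) (a b : M) : Prop where
  commute : Commute a b
  fst_pow : a ^ n = 1
  snd_pow : b ^ n = (a ^ (n - 1)) ^ 2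

/-- The element `K⁻¹K̂` attached to a pair `K`, `K̂`, whose eigenvalues index the `φ_{2i}`. -/
def toralRatio (n : ℕ) (a b : M) : M := a ^ (n - 1) * b

/-- The element `KK̂^(n/2)` attached to a pair `K`, `K̂`, whose eigenvalues `±1` index the `𝟙_j`. -/
def toralInvolution (n : ℕ) (a b : M) : M := a * b ^ (n / 2)

theorem map_toralRatio {F : Type*} [FunLike F M M'] [MonoidHomClass F M M'] (f : F) (n : ℕ)
    (a b : M) :
    f (toralRatio n a b) = toralRatio n (f a) (f b) := by
  simp [toralRatio]

theorem map_toralInvolution {F : Type*} [FunLike F M M'] [MonoidHomClass F M M'] (f : F) (n : ℕ)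
    (a b : M) :
    f (toralInvolution n a b) = toralInvolution n (f a) (f b) := by
  simp [toralInvolution]

theorem toralRatio_prodMk (n : ℕ) (a b : M) (a' b' : M') :
    toralRatio n (a, a') (b, b') = (toralRatio n a b, toralRatio n a' b') :=
  rfl

theorem toralInvolution_prodMk (n : ℕ) (a b : M) (a' b' : M') :
    toralInvolution n (a, a') (b, b') = (toralInvolution n a b, toralInvolution n a' b') :=
  rfl

namespace IsToralPair

theorem map (h : IsToralPair n a b) (f : M →* M') : IsToralPair n (f a) (f b) where
  commute := h.commute.map f
  fst_pow := by rw [← map_pow, h.fst_pow, map_one]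
  snd_pow := by simp only [← map_pow, h.snd_pow]

theorem prodMk (h : IsToralPair n a b) {a' b' : M'} (h' : IsToralPair n a' b') :
    IsToralPair n (a, a') (b, b') where
  commute := h.commute.prod h'.commute
  fst_pow := Prod.ext h.fst_pow h'.fst_pow
  snd_pow := Prod.ext h.snd_pow h'.snd_pow

theorem fst_mul_pow_pred (h : IsToralPair n a b) (hn : n ≠ 0) : a * a ^ (n - 1) = 1 := by
  rw [mul_pow_sub_one hn, h.fst_pow]

theorem snd_pow_sq (h : IsToralPair n a b) : b ^ n ^ 2 = 1 := by
  rw [sq n, pow_mul, h.snd_pow, pow_right_comm, pow_right_comm a, h.fst_pow, one_pow, one_pow]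

theorem commute_fst_toralRatio (h : IsToralPair n a b) : Commute a (toralRatio n a b) :=
  (Commute.self_pow a _).mul_right h.commute

theorem commute_toralRatio_toralInvolution (h : IsToralPair n a b) :
    Commute (toralRatio n a b) (toralInvolution n a b) :=
  h.commute_fst_toralRatio.symm.mul_right
    (((h.commute.pow_left _).mul_left (Commute.refl b)).pow_right _)

theorem fst_mul_toralRatio (h : IsToralPair n a b) (hn : n ≠ 0) : a * toralRatio n a b = b := by
  rw [toralRatio, ← mul_assoc, h.fst_mul_pow_pred hn, one_mul]

theorem fst_pow_mul_toralRatio_pow (h : IsToralPair n a b) (hn : n ≠ 0) (t : ℕ) :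
    a ^ t * toralRatio n a b ^ t = b ^ t := by
  rw [← h.commute_fst_toralRatio.mul_pow, h.fst_mul_toralRatio hn]

theorem toralRatio_pow_of_dvd (h : IsToralPair n a b) (hn : n ≠ 0) (t : ℕ) :
    toralRatio n a b ^ (n * t) = (a ^ (n - 1)) ^ (2 * t) := by
  have hpow := h.fst_pow_mul_toralRatio_pow hn (n * t)
  rwa [pow_mul a, h.fst_pow, one_pow, one_mul, pow_mul b, h.snd_pow, ← pow_mul] at hpow

theorem toralRatio_pow (h : IsToralPair n a b) (hn : n ≠ 0) (h2 : 2 ∣ n) :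
    toralRatio n a b ^ (n ^ 2 / 2) = 1 := by
  rw [sq, Nat.mul_div_assoc n h2, h.toralRatio_pow_of_dvd hn, Nat.mul_div_cancel' h2,
    pow_right_comm, h.fst_pow, one_pow]

theorem toralInvolution_sq (h : IsToralPair n a b) (hn : n ≠ 0) (h2 : 2 ∣ n) :
    toralInvolution n a b ^ 2 = 1 := by
  rw [toralInvolution, (h.commute.pow_right _).mul_pow, ← pow_mul, Nat.div_mul_cancel h2,
    h.snd_pow, ← (Commute.self_pow a _).mul_pow, h.fst_mul_pow_pred hn, one_pow]

theorem toralRatio_pow_quarter (h : IsToralPair n a b) (hn : n ≠ 0) (h4 : 4 ∣ n) :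
    toralRatio n a b ^ (n ^ 2 / 4) = a ^ (n / 2) := by
  have hexp : (n - 1) * (n / 2) = n * (n / 2 - 1) + n / 2 := by
    obtain ⟨r, rfl⟩ := h4
    zify [show 1 ≤ 4 * r by lia, show 1 ≤ 4 * r / 2 by lia]
    rw [show 4 * (r : ℤ) / 2 = 2 * r by lia]
    ring
  rw [sq, Nat.mul_div_assoc n h4, h.toralRatio_pow_of_dvd hn, show 2 * (n / 4) = n / 2 by lia,
    ← pow_mul, hexp, pow_add, pow_mul, h.fst_pow, one_pow, one_mul]

theorem toralInvolution_eq (h : IsToralPair n a b) (hn : n ≠ 0) (h4 : 4 ∣ n) :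
    toralInvolution n a b = a * toralRatio n a b ^ (n ^ 2 / 4 + n / 2) := by
  rw [toralInvolution, pow_add, h.toralRatio_pow_quarter hn h4, h.fst_pow_mul_toralRatio_pow hn]

theorem fst_eq (h : IsToralPair n a b) (hn : n ≠ 0) (h4 : 4 ∣ n) :
    a = toralInvolution n a b * toralRatio n a b ^ (n ^ 2 / 4 - n / 2) := by
  have hexp : n ^ 2 / 4 + n / 2 + (n ^ 2 / 4 - n / 2) = n ^ 2 / 2 := by
    obtain ⟨r, rfl⟩ := h4
    have : r ≤ r ^ 2 := Nat.le_self_pow two_ne_zero r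
    rw [mul_pow]
    lia
  rw [h.toralInvolution_eq hn h4, mul_assoc, ← pow_add, hexp,
    h.toralRatio_pow hn (dvd_trans (by norm_num) h4), mul_one]

theorem adjoin_eq {k A : Type*} [CommSemiring k] [Semiring A] [Algebra k A] {a b : A}
    (h : IsToralPair n a b) (hn : n ≠ 0) (h4 : 4 ∣ n) :
    Algebra.adjoin k {a, b} = Algebra.adjoin k {toralRatio n a b, toralInvolution n a b} := by
  apply le_antisymm <;> refine Algebra.adjoin_le (Set.pair_subset_iff.mpr ?_)
  · set S := Algebra.adjoin k {toralRatio n a b, toralInvolution n a b}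
    have hratio : toralRatio n a b ∈ S := Algebra.subset_adjoin (by simp)
    have hinv : toralInvolution n a b ∈ S := Algebra.subset_adjoin (by simp)
    have ha : a ∈ S := by
      rw [h.fst_eq hn h4]
      exact mul_mem hinv (pow_mem hratio _)
    have hb : b ∈ S := by
      rw [← h.fst_mul_toralRatio hn]
      exact mul_mem ha hratio
    exact ⟨ha, hb⟩
  · have ha : a ∈ Algebra.adjoin k {a, b} := Algebra.subset_adjoin (by simp)
    have hb : b ∈ Algebra.adjoin k {a, b} := Algebra.subset_adjoin (by simp)
    exact ⟨mul_mem (pow_mem ha _) hb, mul_mem ha (pow_mem hb _)⟩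

end IsToralPair

end ToralPair

section Verma

variable {k : Type*} [Field k]

/-- The function `m ↦ x * a ^ (-m)`, for `p = (a, x)`: the eigenvalue of a torus element on the
`m`-th basis vector of a Verma module, when it acts by `x` on the highest weight vector and
`F` divides its eigenvalue by `a`. -/
def toralWeight : k × k →* (ℤ → k) where
  toFun p m := p.2 * p.1 ^ (-m)
  map_one' := by ext m; simp
  map_mul' p p' := by
    ext m
    simp only [Prod.fst_mul, Prod.snd_mul, Pi.mul_apply, mul_zpow]
    exact mul_mul_mul_comm ..

theorem toralWeight_apply (a x : k) (m : ℤ) : toralWeight (a, x) m = x * a ^ (-m) :=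
  rfl

theorem lmul_toralWeight_conj_weightedShift {a x : k} {r : ℕ} (ha : a ≠ 0) (hr : r ≠ 0)
    (hpow : toralWeight (a, x) ^ r = 1) (w : ℤ → k) (d : ℤ) :
    Algebra.lmul k (ℤ → k) (toralWeight (a, x)) * weightedShift w d *
      Algebra.lmul k (ℤ → k) (toralWeight (a, x)) ^ (r - 1) = a ^ d • weightedShift w d := by
  ext f m
  have hshift : toralWeight (a, x) m = a ^ d * toralWeight (a, x) (m + d) := by
    rw [toralWeight_apply, toralWeight_apply, mul_left_comm, ← zpow_add₀ ha]
    congr 2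
    ring
  have hinv : toralWeight (a, x) (m + d) * toralWeight (a, x) (m + d) ^ (r - 1) = 1 := by
    rw [mul_pow_sub_one hr]
    exact congrFun hpow (m + d)
  rw [← map_pow]
  simp only [Module.End.mul_apply, Algebra.coe_lmul_eq_mul, LinearMap.mul_apply', Pi.mul_apply,
    Pi.pow_apply, weightedShift_apply, LinearMap.smul_apply, Pi.smul_apply, smul_eq_mul, hshift]
  linear_combination a ^ d * w m * f (m + d) * hinv

/-- The scalar by which `E` maps the `m`-th basis vector of a Verma module to the previous one,
where `l` is the eigenvalue of `K⁻¹K̂` on the highest weight vector. It is the solution of the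
recursion `vermaCoeff_sub` vanishing at `m = 0`. -/
def vermaCoeff (q l : k) (m : ℤ) : k := (q ^ m - 1) * (l * q ^ m - q) / (q - 1)

theorem vermaCoeff_eq_zero {q : k} {N : ℕ} (hq : q ^ N = 1) (l : k) {m : ℤ} (hm : (N : ℤ) ∣ m) :
    vermaCoeff q l m = 0 := by
  obtain ⟨r, rfl⟩ := hm
  simp [vermaCoeff, zpow_mul, hq]

theorem vermaCoeff_sub {q : k} (hq0 : q ≠ 0) (hq1 : q ≠ 1) (l : k) (m : ℤ) :
    vermaCoeff q l m - q⁻¹ * vermaCoeff q l (m + 1) = 1 - l * (q ^ 2) ^ m := by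
  have hsub : q - 1 ≠ 0 := sub_ne_zero.mpr hq1
  have hsq : (q ^ 2) ^ m = q ^ m * q ^ m := by rw [sq, mul_zpow]
  rw [vermaCoeff, vermaCoeff, hsq, zpow_add_one₀ hq0]
  field_simp
  ring

/-- The action of `E` on a product of truncated Verma modules whose basis vectors are the point
masses on `ℤ`. -/
def vermaRaise (q l : k) : Module.End k (ℤ → k) := weightedShift (fun m => vermaCoeff q l (m + 1)) 1

variable (k) in
/-- The action of `F` on a product of truncated Verma modules whose basis vectors are the point
masses on `ℤ`. Cutting at the multiples of `N` makes `F` nilpotent. -/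
def vermaLower (N : ℕ) : Module.End k (ℤ → k) :=
  weightedShift (fun m => if (N : ℤ) ∣ m then 0 else 1) (-1)

theorem exists_lt_dvd_sub {N : ℕ} (hN : N ≠ 0) (m : ℤ) : ∃ s < N, (N : ℤ) ∣ m - s := by
  refine ⟨(m % N).toNat, ?_, ?_⟩
  · have := Int.emod_lt_of_pos m (show (0 : ℤ) < N by lia)
    lia
  · rw [Int.toNat_of_nonneg (Int.emod_nonneg m (by lia))]
    exact Int.dvd_self_sub_emod

theorem vermaRaise_pow {q : k} {N : ℕ} (hq : q ^ N = 1) (hN : N ≠ 0) (l : k) :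
    vermaRaise q l ^ N = 0 := by
  refine weightedShift_pow_eq_zero fun m => ?_
  obtain ⟨s, hs, hdvd⟩ := exists_lt_dvd_sub hN (-(m + 1))
  refine ⟨s, hs, vermaCoeff_eq_zero hq l ?_⟩
  rw [← dvd_neg]
  rwa [nsmul_one, neg_add, neg_add, add_right_comm, ← neg_add, ← sub_eq_add_neg]

theorem vermaLower_pow {N : ℕ} (hN : N ≠ 0) : vermaLower k N ^ N = 0 := by
  refine weightedShift_pow_eq_zero fun m => ?_
  obtain ⟨s, hs, hdvd⟩ := exists_lt_dvd_sub hN m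
  exact ⟨s, hs, if_pos (by simpa [← sub_eq_add_neg] using hdvd)⟩

theorem vermaLower_mul_vermaRaise {q : k} {N : ℕ} (hq : q ^ N = 1) (l : k) :
    vermaLower k N * vermaRaise q l = Algebra.lmul k (ℤ → k) (vermaCoeff q l) := by
  ext f m
  suffices (N : ℤ) ∣ m → vermaCoeff q l m = 0 ∨ f m = 0 by
    simpa [vermaLower, vermaRaise, weightedShift_apply]
  exact fun h => .inl (vermaCoeff_eq_zero hq l h)

theorem vermaRaise_mul_vermaLower {q : k} {N : ℕ} (hq : q ^ N = 1) (l : k) :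
    vermaRaise q l * vermaLower k N =
      Algebra.lmul k (ℤ → k) (fun m => vermaCoeff q l (m + 1)) := by
  ext f m
  suffices (N : ℤ) ∣ m + 1 → vermaCoeff q l (m + 1) = 0 ∨ f m = 0 by
    simpa [vermaLower, vermaRaise, weightedShift_apply]
  exact fun h => .inl (vermaCoeff_eq_zero hq l h)

theorem vermaLower_mul_vermaRaise_sub {q : k} {N : ℕ} (hq : q ^ N = 1) (hq0 : q ≠ 0) (hq1 : q ≠ 1)
    (l : k) :
    vermaLower k N * vermaRaise q l - q⁻¹ • (vermaRaise q l * vermaLower k N) =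
      1 - Algebra.lmul k (ℤ → k) (toralWeight ((q ^ 2)⁻¹, l)) := by
  rw [vermaLower_mul_vermaRaise hq, vermaRaise_mul_vermaLower hq, ← map_smul, ← map_sub,
    ← map_one (Algebra.lmul k (ℤ → k)), ← map_sub]
  congr 1
  ext m
  simpa [toralWeight_apply] using vermaCoeff_sub hq0 hq1 l m

end Verma

section Representation

variable {k : Type} [Field k] {n : ℕ} {q x y : k}

theorem isToralPair_root (hn : n ≠ 0) (hq : q ^ n ^ 2 = 1) :
    IsToralPair n (q ^ n) (q ^ n * (q ^ 2)⁻¹) where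
  commute := .all _ _
  fst_pow := by rw [← pow_mul, ← sq, hq]
  snd_pow := by
    have hqn : (q ^ n) ^ n = 1 := by rw [← pow_mul, ← sq, hq]
    rw [eq_inv_of_mul_eq_one_right ((mul_pow_sub_one hn _).trans hqn), mul_pow, hqn, one_mul,
      inv_pow, inv_pow, pow_right_comm]

theorem toralRatio_root (hn : n ≠ 0) (hq : q ^ n ^ 2 = 1) :
    toralRatio n (q ^ n) (q ^ n * (q ^ 2)⁻¹) = (q ^ 2)⁻¹ := by
  rw [toralRatio, ← mul_assoc, mul_comm (_ ^ _), (isToralPair_root hn hq).fst_mul_pow_pred hn,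
    one_mul]

theorem toralInvolution_root (hn : n ≠ 0) (h2 : 2 ∣ n) (hq : IsPrimitiveRoot q (n ^ 2)) :
    toralInvolution n (q ^ n) (q ^ n * (q ^ 2)⁻¹) = -1 := by
  have hq0 : q ≠ 0 := hq.ne_zero (pow_ne_zero 2 hn)
  rw [toralInvolution, mul_pow, inv_pow, ← pow_mul, ← pow_mul, Nat.mul_div_cancel' h2,
    mul_comm (_ ^ (n * _)), mul_inv_cancel_left₀ (pow_ne_zero n hq0), ← Nat.mul_div_assoc n h2,
    ← sq, pow_half_eq_neg_one hq (pow_ne_zero 2 hn) (dvd_pow h2 two_ne_zero)]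

theorem toralRatio_toralWeight_root (hn : n ≠ 0) (hq : q ^ n ^ 2 = 1) (x y : k) :
    toralRatio n (toralWeight (q ^ n, x)) (toralWeight (q ^ n * (q ^ 2)⁻¹, y)) =
      toralWeight ((q ^ 2)⁻¹, toralRatio n x y) := by
  rw [← map_toralRatio, toralRatio_prodMk, toralRatio_root hn hq]

variable (n q x y) in
/-- The images of the generators `K`, `K̂`, `E`, `F` in the truncated Verma module whose highest
weight vector has `K`-eigenvalue `x` and `K̂`-eigenvalue `y`. -/
def vermaGen : Fin 4 → Module.End k (ℤ → k) :=
  ![Algebra.lmul k (ℤ → k) (toralWeight (q ^ n, x)),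
    Algebra.lmul k (ℤ → k) (toralWeight (q ^ n * (q ^ 2)⁻¹, y)),
    vermaRaise q (toralRatio n x y), vermaLower k (n ^ 2)]

theorem vermaGen_rel (hn : 1 < n) (hq : IsPrimitiveRoot q (n ^ 2)) (hxy : IsToralPair n x y)
    ⦃u v : FreeAlgebra k (Fin 4)⦄ (huv : Rel k n q u v) :
    FreeAlgebra.lift k (vermaGen n q x y) u = FreeAlgebra.lift k (vermaGen n q x y) v := by
  have hn0 : n ≠ 0 := by lia
  have hN0 : n ^ 2 ≠ 0 := pow_ne_zero 2 hn0
  have hq0 : q ≠ 0 := hq.ne_zero hN0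
  have hq1 : q ≠ 1 := hq.ne_one (Nat.one_lt_pow two_ne_zero hn)
  have hqn0 : q ^ n ≠ 0 := pow_ne_zero n hq0
  have hqn0' : q ^ n * (q ^ 2)⁻¹ ≠ 0 := mul_ne_zero hqn0 (inv_ne_zero (pow_ne_zero 2 hq0))
  have hfun := ((isToralPair_root hn0 hq.pow_eq_one).prodMk hxy).map toralWeight
  have hend := hfun.map (Algebra.lmul k (ℤ → k) : (ℤ → k) →* Module.End k (ℤ → k))
  cases huv <;> simp only [map_pow, map_mul, map_sub, map_one, map_zero, map_smul,
    FreeAlgebra.lift_ι_apply, vermaGen, Matrix.cons_val]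
  case Kord => exact hend.fst_pow
  case Khord => exact hend.snd_pow
  case KKh => exact hend.commute.eq
  case KE =>
    exact (lmul_toralWeight_conj_weightedShift hqn0 hn0 hfun.fst_pow _ 1).trans
      (by rw [zpow_one, vermaRaise])
  case KF =>
    exact (lmul_toralWeight_conj_weightedShift hqn0 hn0 hfun.fst_pow _ (-1)).trans
      (by rw [zpow_neg_one, vermaLower])
  case KhE =>
    exact (lmul_toralWeight_conj_weightedShift hqn0' hN0 hfun.snd_pow_sq _ 1).trans
      (by rw [zpow_one, vermaRaise])
  case KhF =>
    exact (lmul_toralWeight_conj_weightedShift hqn0' hN0 hfun.snd_pow_sq _ (-1)).trans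
      (by rw [zpow_neg_one, mul_inv, inv_inv, vermaLower])
  case Enil => exact vermaRaise_pow hq.pow_eq_one hN0 _
  case Fnil => exact vermaLower_pow hN0
  case EF =>
    rw [vermaLower_mul_vermaRaise_sub hq.pow_eq_one hq0 hq1, ← toralRatio_toralWeight_root hn0
      hq.pow_eq_one, map_toralRatio, toralRatio]

/-- The representation of `ũ_q(sl₂)` on a truncated Verma module of highest weight `(x, y)`. -/
def vermaRep (hn : 1 < n) (hq : IsPrimitiveRoot q (n ^ 2)) (hxy : IsToralPair n x y) :
    U k n q →ₐ[k] Module.End k (ℤ → k) :=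
  RingQuot.liftAlgHom k
    ⟨FreeAlgebra.lift k (vermaGen n q x y), vermaGen_rel hn hq hxy⟩

theorem vermaRep_K (hn : 1 < n) (hq : IsPrimitiveRoot q (n ^ 2)) (hxy : IsToralPair n x y) :
    vermaRep hn hq hxy (K k n q) = Algebra.lmul k (ℤ → k) (toralWeight (q ^ n, x)) := by
  rw [vermaRep, K, RingQuot.liftAlgHom_mkAlgHom_apply, FreeAlgebra.lift_ι_apply]
  rfl

theorem vermaRep_Kh (hn : 1 < n) (hq : IsPrimitiveRoot q (n ^ 2)) (hxy : IsToralPair n x y) :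
    vermaRep hn hq hxy (Kh k n q) =
      Algebra.lmul k (ℤ → k) (toralWeight (q ^ n * (q ^ 2)⁻¹, y)) := by
  rw [vermaRep, Kh, RingQuot.liftAlgHom_mkAlgHom_apply, FreeAlgebra.lift_ι_apply]
  rfl

end Representation

section Idempotents

variable {k : Type} [Field k] {n i j i' j' : ℕ} {q : k}

variable (k n q) in
theorem isToralPair_K_Kh : IsToralPair n (K k n q) (Kh k n q) where
  commute := by
    simpa [K, Kh, Commute, SemiconjBy] using
      RingQuot.mkAlgHom_rel k (Rel.KKh (k := k) (n := n) (q := q))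
  fst_pow := by simpa [K] using RingQuot.mkAlgHom_rel k (Rel.Kord (k := k) (n := n) (q := q))
  snd_pow := by simpa [K, Kh] using RingQuot.mkAlgHom_rel k (Rel.Khord (k := k) (n := n) (q := q))

theorem isPrimitiveRoot_sq (hn : n ≠ 0) (h2 : 2 ∣ n) (hq : IsPrimitiveRoot q (n ^ 2)) :
    IsPrimitiveRoot (q ^ 2) (n ^ 2 / 2) :=
  hq.pow (by positivity) (Nat.mul_div_cancel' (dvd_pow h2 two_ne_zero)).symm

theorem natCast_two_ne_zero (hn : n ≠ 0) (h2 : 2 ∣ n) (hq : IsPrimitiveRoot q (n ^ 2)) :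
    ((2 : ℕ) : k) ≠ 0 :=
  natCast_ne_zero_of_dvd hq (pow_ne_zero 2 hn) (dvd_pow h2 two_ne_zero)

theorem natCast_half_sq_ne_zero (hn : n ≠ 0) (h2 : 2 ∣ n) (hq : IsPrimitiveRoot q (n ^ 2)) :
    ((n ^ 2 / 2 : ℕ) : k) ≠ 0 :=
  natCast_ne_zero_of_dvd hq (pow_ne_zero 2 hn) (Nat.div_dvd_of_dvd (dvd_pow h2 two_ne_zero))

theorem phi_eq_eigenProj (hn : n ≠ 0) (h2 : 2 ∣ n) (hq : IsPrimitiveRoot q (n ^ 2)) (i : ℕ) :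
    phi k n q i = eigenProj (n ^ 2 / 2) (toralRatio n (K k n q) (Kh k n q)) ((q ^ 2) ^ i) := by
  rw [phi, eigenProj, Nat.cast_div (dvd_pow h2 two_ne_zero) (natCast_two_ne_zero hn h2 hq),
    inv_div, Nat.cast_pow, div_eq_inv_mul, Nat.cast_ofNat]
  congr 1
  refine Finset.sum_congr rfl fun t _ => ?_
  rw [smul_pow, ← pow_mul, inv_pow, inv_pow, ← pow_mul]
  rfl

theorem oneJ_eq_eigenProj (hj : j ≤ 1) :
    oneJ k n q j = eigenProj 2 (toralInvolution n (K k n q) (Kh k n q)) ((-1 : k) ^ j) := by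
  interval_cases j
  · rw [oneJ, if_pos rfl, pow_zero, eigenProj_two_one, toralInvolution]
  · rw [oneJ, if_neg one_ne_zero, pow_one, eigenProj_two_neg_one, toralInvolution]

theorem eIdem_eq_jointEigenProj (hn : n ≠ 0) (h2 : 2 ∣ n) (hq : IsPrimitiveRoot q (n ^ 2)) (i : ℕ)
    (hj : j ≤ 1) :
    eIdem k n q i j = jointEigenProj (n ^ 2 / 2) 2 (toralRatio n (K k n q) (Kh k n q))
      (toralInvolution n (K k n q) (Kh k n q)) ((q ^ 2) ^ i) ((-1 : k) ^ j) := by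
  rw [eIdem, phi_eq_eigenProj hn h2 hq, oneJ_eq_eigenProj hj, jointEigenProj]

theorem eIdem_mem_adjoin (hn : n ≠ 0) (h4 : 4 ∣ n) (hq : IsPrimitiveRoot q (n ^ 2)) (i : ℕ)
    (hj : j ≤ 1) : eIdem k n q i j ∈ Algebra.adjoin k {K k n q, Kh k n q} := by
  rw [eIdem_eq_jointEigenProj hn (by lia) hq i hj, (isToralPair_K_Kh k n q).adjoin_eq hn h4]
  apply jointEigenProj_mem
  · exact Algebra.subset_adjoin (Set.mem_insert _ _)
  · exact Algebra.subset_adjoin (Set.mem_insert_of_mem _ rfl)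

theorem isIdempotentElem_eIdem (hn : n ≠ 0) (h2 : 2 ∣ n) (hq : IsPrimitiveRoot q (n ^ 2)) (i : ℕ)
    (hj : j ≤ 1) : IsIdempotentElem (eIdem k n q i j) := by
  have hpair := isToralPair_K_Kh k n q
  rw [eIdem_eq_jointEigenProj hn h2 hq i hj]
  exact isIdempotentElem_jointEigenProj hpair.commute_toralRatio_toralInvolution
    (natCast_half_sq_ne_zero hn h2 hq) (natCast_two_ne_zero hn h2 hq)
    (hpair.toralRatio_pow hn h2) (hpair.toralInvolution_sq hn h2)
    (pow_pow_eq_one (isPrimitiveRoot_sq hn h2 hq).pow_eq_one i) (pow_pow_eq_one neg_one_sq j)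

theorem eIdem_mul_eIdem_of_ne (hn : n ≠ 0) (h2 : 2 ∣ n) (hq : IsPrimitiveRoot q (n ^ 2))
    (hi : 1 ≤ i) (hi_le : i ≤ n ^ 2 / 2) (hj : j ≤ 1) (hi' : 1 ≤ i') (hi'_le : i' ≤ n ^ 2 / 2)
    (hj' : j' ≤ 1) (hne : (i, j) ≠ (i', j')) : eIdem k n q i j * eIdem k n q i' j' = 0 := by
  have hpair := isToralPair_K_Kh k n q
  have hneg := isPrimitiveRoot_neg_one hq (pow_ne_zero 2 hn) (dvd_pow h2 two_ne_zero)
  have hchar : (q ^ 2) ^ i ≠ (q ^ 2) ^ i' ∨ (-1 : k) ^ j ≠ (-1) ^ j' := by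
    by_contra! h
    refine hne (Prod.ext ?_ ?_)
    · exact injOn_pow_Ico_of_isPrimitiveRoot (isPrimitiveRoot_sq hn h2 hq) 1
        ⟨hi, by lia⟩ ⟨hi', by lia⟩ h.1
    · exact injOn_pow_Ico_of_isPrimitiveRoot hneg 0 ⟨by lia, by lia⟩ ⟨by lia, by lia⟩ h.2
  rw [eIdem_eq_jointEigenProj hn h2 hq i hj, eIdem_eq_jointEigenProj hn h2 hq i' hj']
  exact jointEigenProj_mul_jointEigenProj_of_ne hpair.commute_toralRatio_toralInvolution
    (hpair.toralRatio_pow hn h2) (hpair.toralInvolution_sq hn h2)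
    (pow_pow_eq_one (isPrimitiveRoot_sq hn h2 hq).pow_eq_one i) (pow_pow_eq_one neg_one_sq j)
    (pow_pow_eq_one (isPrimitiveRoot_sq hn h2 hq).pow_eq_one i') (pow_pow_eq_one neg_one_sq j')
    hchar

theorem sum_eIdem (hn : n ≠ 0) (h2 : 2 ∣ n) (hq : IsPrimitiveRoot q (n ^ 2)) :
    ∑ i ∈ Finset.Icc 1 (n ^ 2 / 2), ∑ j ∈ Finset.range 2, eIdem k n q i j = 1 := by
  have hneg := isPrimitiveRoot_neg_one hq (pow_ne_zero 2 hn) (dvd_pow h2 two_ne_zero)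
  have hsum := sum_Ico_jointEigenProj (isPrimitiveRoot_sq hn h2 hq) hneg
    (natCast_half_sq_ne_zero hn h2 hq) (natCast_two_ne_zero hn h2 hq)
    (toralRatio n (K k n q) (Kh k n q))
    (toralInvolution n (K k n q) (Kh k n q)) 1 0
  rw [add_comm 1, Finset.Ico_add_one_right_eq_Icc, zero_add, ← Finset.range_eq_Ico] at hsum
  rw [← hsum]
  refine Finset.sum_congr rfl fun i _ => Finset.sum_congr rfl fun j hj => ?_
  exact eIdem_eq_jointEigenProj hn h2 hq i (Nat.le_of_lt_succ (Finset.mem_range.mp hj))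

theorem isIndecomposableIn_eIdem (hn : n ≠ 0) (h4 : 4 ∣ n) (hq : IsPrimitiveRoot q (n ^ 2))
    (i : ℕ) (hj : j ≤ 1) :
    IsIndecomposableIn (Algebra.adjoin k {K k n q, Kh k n q}) (eIdem k n q i j) := by
  have h2 : 2 ∣ n := by lia
  have hpair := isToralPair_K_Kh k n q
  rw [eIdem_eq_jointEigenProj hn h2 hq i hj, hpair.adjoin_eq hn h4]
  apply isIndecomposableIn_adjoin
  rintro _ (rfl | rfl)
  · exact ⟨_, fst_mul_jointEigenProj (hpair.toralRatio_pow hn h2)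
      (pow_pow_eq_one (isPrimitiveRoot_sq hn h2 hq).pow_eq_one i) ..⟩
  · exact ⟨_, snd_mul_jointEigenProj hpair.commute_toralRatio_toralInvolution
      (hpair.toralInvolution_sq hn h2) (pow_pow_eq_one neg_one_sq j) ..⟩

end Idempotents

section Nonvanishing

variable {k : Type} [Field k] {n j : ℕ} {q : k}

theorem isToralPair_neg_one_pow (h2 : 2 ∣ n) (r : ℕ) :
    IsToralPair n ((-1 : k) ^ r) ((-1) ^ r) where
  commute := .all _ _
  fst_pow := by rw [pow_right_comm, (even_iff_two_dvd.mpr h2).neg_one_pow, one_pow]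
  snd_pow := by
    rw [pow_right_comm, (even_iff_two_dvd.mpr h2).neg_one_pow, one_pow, pow_right_comm,
      pow_right_comm (-1), neg_one_sq, one_pow, one_pow]

theorem toralRatio_neg_one_pow (hn : n ≠ 0) (h2 : 2 ∣ n) (r : ℕ) :
    toralRatio n ((-1 : k) ^ r) ((-1) ^ r) = 1 := by
  rw [toralRatio, pow_sub_one_mul hn, (isToralPair_neg_one_pow h2 r).fst_pow]

theorem toralInvolution_neg_one_pow (h4 : 4 ∣ n) (r : ℕ) :
    toralInvolution n ((-1 : k) ^ r) ((-1) ^ r) = (-1) ^ r := by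
  have heven : Even (n / 2) := even_iff_two_dvd.mpr (by lia)
  rw [toralInvolution, pow_right_comm, heven.neg_one_pow, one_pow, mul_one]

theorem vermaRep_eIdem {x y : k} (hn : 1 < n) (h2 : 2 ∣ n) (hq : IsPrimitiveRoot q (n ^ 2))
    (hxy : IsToralPair n x y) (i : ℕ) (hj : j ≤ 1) :
    vermaRep hn hq hxy (eIdem k n q i j) = Algebra.lmul k (ℤ → k)
      (jointEigenProj (n ^ 2 / 2) 2 (toralWeight ((q ^ 2)⁻¹, toralRatio n x y))
        (toralWeight (-1, toralInvolution n x y)) ((q ^ 2) ^ i) ((-1 : k) ^ j)) := by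
  have hn0 : n ≠ 0 := by lia
  rw [eIdem_eq_jointEigenProj hn0 h2 hq i hj, map_jointEigenProj, map_jointEigenProj,
    map_toralRatio, map_toralInvolution, vermaRep_K, vermaRep_Kh, ← map_toralRatio,
    ← map_toralInvolution, toralRatio_toralWeight_root hn0 hq.pow_eq_one, ← map_toralInvolution,
    toralInvolution_prodMk, toralInvolution_root hn0 h2 hq]

theorem eIdem_ne_zero (hn : n ≠ 0) (h4 : 4 ∣ n) (hq : IsPrimitiveRoot q (n ^ 2)) (i : ℕ)
    (hj : j ≤ 1) : eIdem k n q i j ≠ 0 := by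
  have hn1 : 1 < n := by have := Nat.le_of_dvd (by lia) h4; lia
  have h2 : 2 ∣ n := by lia
  have hq0 : q ≠ 0 := hq.ne_zero (pow_ne_zero 2 hn)
  have hxy := isToralPair_neg_one_pow (k := k) h2 (i + j)
  have hratio : toralWeight ((q ^ 2)⁻¹, (1 : k)) (i : ℤ) = (q ^ 2) ^ i := by
    simp [toralWeight_apply]
  have hinv : toralWeight (-1, (-1 : k) ^ (i + j)) (i : ℤ) = (-1) ^ j := by
    rw [toralWeight_apply, zpow_neg, zpow_natCast, pow_add, mul_right_comm,
      mul_inv_cancel₀ (pow_ne_zero i (neg_ne_zero.mpr one_ne_zero)), one_mul]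
  intro hzero
  have hend := vermaRep_eIdem hn1 h2 hq hxy i hj
  rw [hzero, map_zero, toralRatio_neg_one_pow hn h2, toralInvolution_neg_one_pow h4, eq_comm,
    map_eq_zero_iff _ Algebra.lmul_injective] at hend
  have hval := congrArg (Pi.evalAlgHom k (fun _ : ℤ => k) (i : ℤ)) hend
  rw [map_jointEigenProj, Pi.evalAlgHom_apply, Pi.evalAlgHom_apply, hratio, hinv,
    jointEigenProj_self (natCast_half_sq_ne_zero hn h2 hq) (natCast_two_ne_zero hn h2 hq)
      (pow_ne_zero _ (pow_ne_zero 2 hq0)) (pow_ne_zero _ (neg_ne_zero.mpr one_ne_zero)),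
    map_zero] at hval
  exact one_ne_zero hval

end Nonvanishing

end QFL

open QFL in
theorem statement0_general (k : Type) [Field k] (n : ℕ) (hn : 0 < n) (h4 : 4 ∣ n) (q : k)
    (hq : IsPrimitiveRoot q (n ^ 2)) :
    (∀ i j : ℕ, 1 ≤ i → i ≤ n ^ 2 / 2 → j ≤ 1 →
      eIdem k n q i j ∈ Algebra.adjoin k {K k n q, Kh k n q} ∧
      eIdem k n q i j ≠ 0 ∧
      eIdem k n q i j * eIdem k n q i j = eIdem k n q i j) ∧
    (∀ i j i' j' : ℕ, 1 ≤ i → i ≤ n ^ 2 / 2 → j ≤ 1 → 1 ≤ i' → i' ≤ n ^ 2 / 2 → j' ≤ 1 →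
      (i, j) ≠ (i', j') → eIdem k n q i j * eIdem k n q i' j' = 0) ∧
    (∑ i ∈ Finset.Icc 1 (n ^ 2 / 2), ∑ j ∈ Finset.range 2, eIdem k n q i j) = 1 ∧
    (∀ i j : ℕ, 1 ≤ i → i ≤ n ^ 2 / 2 → j ≤ 1 →
      ¬ ∃ a b : U k n q, a ∈ Algebra.adjoin k {K k n q, Kh k n q} ∧
        b ∈ Algebra.adjoin k {K k n q, Kh k n q} ∧ a ≠ 0 ∧ b ≠ 0 ∧
        a * a = a ∧ b * b = b ∧ a * b = 0 ∧ b * a = 0 ∧ eIdem k n q i j = a + b) := by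
  have h2 : 2 ∣ n := by lia
  refine ⟨fun i j _ _ hj => ⟨?_, ?_, ?_⟩, fun i j i' j' hi hi_le hj hi' hi'_le hj' hne => ?_, ?_,
    fun i j _ _ hj => ?_⟩
  · exact eIdem_mem_adjoin hn.ne' h4 hq i hj
  · exact eIdem_ne_zero hn.ne' h4 hq i hj
  · exact isIdempotentElem_eIdem hn.ne' h2 hq i hj
  · exact eIdem_mul_eIdem_of_ne hn.ne' h2 hq hi hi_le hj hi' hi'_le hj' hne
  · exact sum_eIdem hn.ne' h2 hq
  · exact isIndecomposableIn_eIdem hn.ne' h4 hq i hj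

open QFL in
/-- The `e_{2i,j}` form a complete set of primitive orthogonal idempotents of the
subalgebra `u⁰` of `ũ_q(sl₂)` generated by `K` and `K̂`. -/
theorem statement0 (k : Type) [Field k] [IsAlgClosed k] [CharZero k]
    (n : ℕ) (hn : 0 < n) (h4 : 4 ∣ n) (q : k) (hq : IsPrimitiveRoot q (n ^ 2)) :
    (∀ i j : ℕ, 1 ≤ i → i ≤ n ^ 2 / 2 → j ≤ 1 →
      eIdem k n q i j ∈ Algebra.adjoin k {K k n q, Kh k n q} ∧
      eIdem k n q i j ≠ 0 ∧
      eIdem k n q i j * eIdem k n q i j = eIdem k n q i j) ∧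
    (∀ i j i' j' : ℕ, 1 ≤ i → i ≤ n ^ 2 / 2 → j ≤ 1 → 1 ≤ i' → i' ≤ n ^ 2 / 2 → j' ≤ 1 →
      (i, j) ≠ (i', j') → eIdem k n q i j * eIdem k n q i' j' = 0) ∧
    (∑ i ∈ Finset.Icc 1 (n ^ 2 / 2), ∑ j ∈ Finset.range 2, eIdem k n q i j) = 1 ∧
    (∀ i j : ℕ, 1 ≤ i → i ≤ n ^ 2 / 2 → j ≤ 1 →
      ¬ ∃ a b : U k n q, a ∈ Algebra.adjoin k {K k n q, Kh k n q} ∧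
        b ∈ Algebra.adjoin k {K k n q, Kh k n q} ∧ a ≠ 0 ∧ b ≠ 0 ∧
        a * a = a ∧ b * b = b ∧ a * b = 0 ∧ b * a = 0 ∧ eIdem k n q i j = a + b) :=
  statement0_general k n hn h4 q hq
end
end

section
/- For 1 ≤ i ≤ n²/2, j ∈ {0,1} and 0 ≤ s ≤ n²−1 the following hold in u: K^{-1}K̂·E^sα_{2i,j} = q^{2i−2−2s}·E^sα_{2i,j} and KK̂^{n/2}·E^sα_{2i,j} = (−1)^{s+1+j}·E^sα_{2i,j}; moreover for 1 ≤ s ≤ n²−1, F·E^sα_{2i,j} = s_{q^{-1}}(1 − q^{2i−1−s})·E^{s−1}α_{2i,j}. -/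
noncomputable section

open scoped TensorProduct

/-!
The elements `g = K⁻¹K̂` and `c = KK̂^(n/2)` commute with each other and skew-commute with `E` and
`F`, while `φ_{2i}` and `𝟙_j` are, up to scalars, the geometric sums that project onto eigenspaces
of `g` and `c`. Hence `α_{2i,j}` is a common eigenvector of `g` and `c`, and `F` kills it since
`F^(n²) = 0`. The rest is the usual `sl₂`-string computation: if `FE - pEF = 1 - g`,
`gE = p² Eg`, `gv = av` and `Fv = 0`, then `F E^(s+1) v = (1 + p + ⋯ + p^s)(1 - a p^s) E^s v`
by induction on `s`. Here `p = q⁻¹` and `a = q^(2i-2)`.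
-/

namespace QFL

section SkewCommute

variable {k A V : Type*} [CommRing k] [Ring A] [Algebra k A]

/-- `x` and `y` *skew-commute* with factor `c` if `x * y = c • (y * x)`; this is phrased through
`SemiconjBy` so that the multiplicative calculus of semiconjugation applies. -/
def SkewCommute (c : k) (x y : A) : Prop :=
  SemiconjBy x y (c • y)

namespace SkewCommute

variable {c c' : k} {x x' y z : A}

theorem of_mul_mul_eq (hz : z * x = 1) (h : x * y * z = c • y) : SkewCommute c x y := by
  rw [SkewCommute, SemiconjBy, ← h, mul_assoc _ z, hz, mul_one]

theorem mul_left (h : SkewCommute c x y) (h' : SkewCommute c' x' y) :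
    SkewCommute (c * c') (x * x') y := by
  rw [SkewCommute, mul_comm c, mul_smul]
  exact (SemiconjBy.smul_right h c').mul_left h'

theorem pow_left (h : SkewCommute c x y) (m : ℕ) : SkewCommute (c ^ m) (x ^ m) y := by
  induction m with
  | zero => simp [SkewCommute]
  | succ m ih => simpa only [pow_succ] using ih.mul_left h

theorem pow_right (h : SkewCommute c x y) (m : ℕ) : SkewCommute (c ^ m) x (y ^ m) := by
  rw [SkewCommute, ← smul_pow]
  exact SemiconjBy.pow_right h m

theorem smul_smul_eq [AddCommGroup V] [Module k V] [Module A V] [IsScalarTower k A V]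
    (h : SkewCommute c x y) {a : k} {v : V} (hv : x • v = a • v) :
    x • y • v = (c * a) • y • v := by
  rw [← mul_smul, SemiconjBy.eq h, smul_mul_assoc, smul_assoc, mul_smul, hv, smul_comm y a,
    mul_smul]

end SkewCommute

theorem smul_pow_succ_smul_of_smul_eq_zero [AddCommGroup V] [Module k V] [Module A V]
    [IsScalarTower k A V] {p a : k} {e f g : A} {v : V}
    (hfe : f * e - p • (e * f) = 1 - g) (hge : SkewCommute (p ^ 2) g e)
    (hgv : g • v = a • v) (hfv : f • v = 0) (s : ℕ) :
    f • e ^ (s + 1) • v = ((∑ t ∈ Finset.range (s + 1), p ^ t) * (1 - a * p ^ s)) • e ^ s • v := by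
  have move_f (s : ℕ) : f • e ^ (s + 1) • v =
      p • e • f • e ^ s • v + (1 - (p ^ 2) ^ s * a) • e ^ s • v := by
    rw [pow_succ', mul_smul, ← mul_smul f, sub_eq_iff_eq_add'.mp hfe, add_smul, sub_smul, one_smul,
      smul_assoc, mul_smul, (hge.pow_right s).smul_smul_eq hgv, sub_smul, one_smul]
  induction s with
  | zero => simpa [hfv] using move_f 0
  | succ s ih =>
    have coeff : p * ((∑ t ∈ Finset.range (s + 1), p ^ t) * (1 - a * p ^ s)) +
        (1 - (p ^ 2) ^ (s + 1) * a) =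
          (∑ t ∈ Finset.range (s + 1 + 1), p ^ t) * (1 - a * p ^ (s + 1)) := by
      linear_combination a * p ^ (s + 1) * geom_sum_succ' (x := p) (n := s + 1) -
        geom_sum_succ (x := p) (n := s + 1)
    rw [move_f, ih, smul_comm e, ← mul_smul e, ← pow_succ', smul_smul, ← add_smul, coeff]

end SkewCommute

theorem mul_geom_sum_inv_smul {k A : Type*} [Field k] [Ring A] [Algebra k A] {w : k} (hw : w ≠ 0)
    {x : A} {N : ℕ} (hx : (w⁻¹ • x) ^ N = 1) :
    x * ∑ t ∈ Finset.range N, (w⁻¹ • x) ^ t = w • ∑ t ∈ Finset.range N, (w⁻¹ • x) ^ t := by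
  have fixed : (w⁻¹ • x) * ∑ t ∈ Finset.range N, (w⁻¹ • x) ^ t =
      ∑ t ∈ Finset.range N, (w⁻¹ • x) ^ t := by
    rw [← sub_eq_zero, ← sub_one_mul, mul_geom_sum, hx, sub_self]
  rw [← inv_smul_eq_iff₀ hw, ← smul_mul_assoc, fixed]

theorem pow_div_two_eq_neg_one {R : Type*} [CommRing R] [NoZeroDivisors R] {ζ : R} {N : ℕ}
    (hN : N ≠ 0) (heven : Even N) (hζ : IsPrimitiveRoot ζ N) : ζ ^ (N / 2) = -1 :=
  (hζ.pow (Nat.pos_of_ne_zero hN) (Nat.div_mul_cancel heven.two_dvd).symm).eq_neg_one_of_two_right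

theorem mul_div_two_eq_sq_div_two {n : ℕ} (hn : Even n) : n * (n / 2) = n ^ 2 / 2 := by
  rw [sq, Nat.mul_div_assoc n hn.two_dvd]

theorem pow_mul_div_two_eq_neg_one {R : Type*} [CommRing R] [NoZeroDivisors R] {ζ : R} {n : ℕ}
    (hn : n ≠ 0) (heven : Even n) (hζ : IsPrimitiveRoot ζ (n ^ 2)) : ζ ^ (n * (n / 2)) = -1 := by
  rw [mul_div_two_eq_sq_div_two heven]
  exact pow_div_two_eq_neg_one (pow_ne_zero 2 hn) (heven.pow_of_ne_zero two_ne_zero) hζ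

section Relations

variable (k : Type) [Field k] (n : ℕ) (q : k)

theorem K_pow_eq_one : K k n q ^ n = 1 := by
  simpa only [K, map_pow, map_one] using
    RingQuot.mkAlgHom_rel k (Rel.Kord (k := k) (n := n) (q := q))

theorem Kh_pow_eq_Kinv_sq : Kh k n q ^ n = Kinv k n q ^ 2 := by
  simpa only [K, Kinv, Kh, map_pow] using
    RingQuot.mkAlgHom_rel k (Rel.Khord (k := k) (n := n) (q := q))

theorem commute_K_Kh : Commute (K k n q) (Kh k n q) := by
  simpa only [Commute, SemiconjBy, K, Kh, map_mul] using
    RingQuot.mkAlgHom_rel k (Rel.KKh (k := k) (n := n) (q := q))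

theorem F_pow_eq_zero : F k n q ^ n ^ 2 = 0 := by
  simpa only [F, map_pow, map_zero] using
    RingQuot.mkAlgHom_rel k (Rel.Fnil (k := k) (n := n) (q := q))

theorem F_mul_E_sub :
    F k n q * E k n q - q⁻¹ • (E k n q * F k n q) = 1 - Kinv k n q * Kh k n q := by
  simpa only [K, Kinv, Kh, E, F, map_mul, map_pow, map_smul, map_sub, map_one] using
    RingQuot.mkAlgHom_rel k (Rel.EF (k := k) (n := n) (q := q))

theorem Kinv_pow_eq_one : Kinv k n q ^ n = 1 := by
  rw [Kinv, pow_right_comm, K_pow_eq_one, one_pow]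

variable {n}

theorem Kinv_mul_K (hn : n ≠ 0) : Kinv k n q * K k n q = 1 := by
  rw [Kinv, pow_sub_one_mul hn, K_pow_eq_one]

theorem Khinv_mul_Kh (hn : n ≠ 0) : Khinv k n q * Kh k n q = 1 := by
  rw [Khinv, pow_sub_one_mul (pow_ne_zero 2 hn), sq, pow_mul, Kh_pow_eq_Kinv_sq, pow_right_comm,
    Kinv_pow_eq_one, one_pow]

theorem skewCommute_K_E (hn : n ≠ 0) : SkewCommute (q ^ n) (K k n q) (E k n q) :=
  .of_mul_mul_eq (Kinv_mul_K k q hn) <| by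
    simpa only [K, Kinv, E, map_mul, map_pow, map_smul] using
      RingQuot.mkAlgHom_rel k (Rel.KE (k := k) (n := n) (q := q))

theorem skewCommute_K_F (hn : n ≠ 0) : SkewCommute (q ^ n)⁻¹ (K k n q) (F k n q) :=
  .of_mul_mul_eq (Kinv_mul_K k q hn) <| by
    simpa only [K, Kinv, F, map_mul, map_pow, map_smul] using
      RingQuot.mkAlgHom_rel k (Rel.KF (k := k) (n := n) (q := q))

theorem skewCommute_Kh_E (hn : n ≠ 0) :
    SkewCommute (q ^ n * (q ^ 2)⁻¹) (Kh k n q) (E k n q) :=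
  .of_mul_mul_eq (Khinv_mul_Kh k q hn) <| by
    simpa only [Kh, Khinv, E, map_mul, map_pow, map_smul] using
      RingQuot.mkAlgHom_rel k (Rel.KhE (k := k) (n := n) (q := q))

theorem skewCommute_Kh_F (hn : n ≠ 0) :
    SkewCommute ((q ^ n)⁻¹ * q ^ 2) (Kh k n q) (F k n q) :=
  .of_mul_mul_eq (Khinv_mul_Kh k q hn) <| by
    simpa only [Kh, Khinv, F, map_mul, map_pow, map_smul] using
      RingQuot.mkAlgHom_rel k (Rel.KhF (k := k) (n := n) (q := q))

end Relations

section Cartan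

variable {k : Type} [Field k] {n : ℕ} {q : k}

theorem commute_Kinv_Kh : Commute (Kinv k n q) (Kh k n q) :=
  (commute_K_Kh k n q).pow_left _

theorem commute_K_mul_Kh_pow_Kinv_mul_Kh (m : ℕ) :
    Commute (K k n q * Kh k n q ^ m) (Kinv k n q * Kh k n q) := by
  have hK : Commute (K k n q) (Kinv k n q * Kh k n q) :=
    ((Commute.refl _).pow_right _).mul_right (commute_K_Kh k n q)
  have hKh : Commute (Kh k n q) (Kinv k n q * Kh k n q) :=
    commute_Kinv_Kh.symm.mul_right (Commute.refl _)
  exact hK.mul_left (hKh.pow_left m)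

theorem Kinv_mul_Kh_pow_eq_one (heven : Even n) :
    (Kinv k n q * Kh k n q) ^ (n ^ 2 / 2) = 1 := by
  rw [commute_Kinv_Kh.mul_pow, ← mul_div_two_eq_sq_div_two heven, pow_mul, pow_mul,
    Kh_pow_eq_Kinv_sq, Kinv_pow_eq_one, one_pow, one_mul, ← pow_mul,
    Nat.mul_div_cancel' heven.two_dvd, Kinv_pow_eq_one]

theorem K_mul_Kh_pow_half_sq (hn : n ≠ 0) (heven : Even n) :
    (K k n q * Kh k n q ^ (n / 2)) ^ 2 = 1 := by
  have hcomm : Commute (K k n q) (Kinv k n q) := (Commute.refl _).pow_right _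
  rw [((commute_K_Kh k n q).pow_right _).mul_pow, ← pow_mul, Nat.div_mul_cancel heven.two_dvd,
    Kh_pow_eq_Kinv_sq, ← hcomm.mul_pow, hcomm.eq, Kinv_mul_K k q hn, one_pow]

theorem skewCommute_Kinv_mul_Kh_E (hn : n ≠ 0) (hq : q ^ n ^ 2 = 1) :
    SkewCommute (q⁻¹ ^ 2) (Kinv k n q * Kh k n q) (E k n q) := by
  have hKinv : SkewCommute ((q ^ n) ^ (n - 1)) (Kinv k n q) (E k n q) :=
    (skewCommute_K_E k q hn).pow_left (n - 1)
  convert hKinv.mul_left (skewCommute_Kh_E k q hn) using 1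
  rw [← mul_assoc, pow_sub_one_mul hn, ← pow_mul, ← sq, hq, one_mul, inv_pow]

theorem skewCommute_Kinv_mul_Kh_F (hn : n ≠ 0) (hq : q ^ n ^ 2 = 1) :
    SkewCommute (q ^ 2) (Kinv k n q * Kh k n q) (F k n q) := by
  have hKinv : SkewCommute ((q ^ n)⁻¹ ^ (n - 1)) (Kinv k n q) (F k n q) :=
    (skewCommute_K_F k q hn).pow_left (n - 1)
  convert hKinv.mul_left (skewCommute_Kh_F k q hn) using 1
  rw [← mul_assoc, pow_sub_one_mul hn, inv_pow, ← pow_mul, ← sq, hq, inv_one, one_mul]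

theorem skewCommute_K_mul_Kh_pow_half_E (hn : n ≠ 0) (heven : Even n)
    (hq : IsPrimitiveRoot q (n ^ 2)) :
    SkewCommute (-1 : k) (K k n q * Kh k n q ^ (n / 2)) (E k n q) := by
  have hq₀ : q ≠ 0 := hq.ne_zero (pow_ne_zero 2 hn)
  convert (skewCommute_K_E k q hn).mul_left ((skewCommute_Kh_E k q hn).pow_left (n / 2)) using 1
  rw [mul_pow, inv_pow, ← pow_mul, ← pow_mul, Nat.mul_div_cancel' heven.two_dvd,
    pow_mul_div_two_eq_neg_one hn heven hq, mul_left_comm, mul_inv_cancel₀ (pow_ne_zero n hq₀),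
    mul_one]

theorem skewCommute_K_mul_Kh_pow_half_F (hn : n ≠ 0) (heven : Even n)
    (hq : IsPrimitiveRoot q (n ^ 2)) :
    SkewCommute (-1 : k) (K k n q * Kh k n q ^ (n / 2)) (F k n q) := by
  have hq₀ : q ≠ 0 := hq.ne_zero (pow_ne_zero 2 hn)
  convert (skewCommute_K_F k q hn).mul_left ((skewCommute_Kh_F k q hn).pow_left (n / 2)) using 1
  rw [mul_pow, inv_pow, ← pow_mul, ← pow_mul, Nat.mul_div_cancel' heven.two_dvd,
    pow_mul_div_two_eq_neg_one hn heven hq, mul_left_comm, inv_mul_cancel₀ (pow_ne_zero n hq₀),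
    mul_one, inv_neg_one]

end Cartan

section Eigenvectors

variable {k : Type} [Field k] {n : ℕ} {q : k}

theorem phi_eq_smul_geom_sum (i : ℕ) : phi k n q i = ((n ^ 2 : k)⁻¹ * 2) •
    ∑ t ∈ Finset.range (n ^ 2 / 2), ((q ^ (2 * i))⁻¹ • (Kinv k n q * Kh k n q)) ^ t := by
  simp only [phi, smul_pow, pow_mul, inv_pow]

theorem oneJ_eq_smul_geom_sum {j : ℕ} (hj : j ≤ 1) : oneJ k n q j = (2 : k)⁻¹ •
    ∑ t ∈ Finset.range 2, (((-1 : k) ^ j)⁻¹ • (K k n q * Kh k n q ^ (n / 2))) ^ t := by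
  -- `simp` does not find the module structure behind the scalar action built into `RingQuot`.
  have hneg (x : U k n q) : (-1 : k) • x = -x := neg_one_smul k x
  interval_cases j <;> simp [oneJ, Finset.sum_range_succ, sub_eq_add_neg, hneg]

theorem Kinv_mul_Kh_mul_phi (heven : Even n) (hq₀ : q ≠ 0) (hq : q ^ n ^ 2 = 1) (i : ℕ) :
    Kinv k n q * Kh k n q * phi k n q i = q ^ (2 * i) • phi k n q i := by
  have hpow : ((q ^ (2 * i))⁻¹ • (Kinv k n q * Kh k n q)) ^ (n ^ 2 / 2) = 1 := by
    have hexp : 2 * i * (n ^ 2 / 2) = n ^ 2 * i := by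
      rw [mul_right_comm, Nat.mul_div_cancel' (heven.pow_of_ne_zero two_ne_zero).two_dvd]
    rw [smul_pow, Kinv_mul_Kh_pow_eq_one heven, inv_pow, ← pow_mul, hexp, pow_mul, hq, one_pow,
      inv_one, one_smul]
  rw [phi_eq_smul_geom_sum, mul_smul_comm, smul_comm (q ^ (2 * i))]
  exact congrArg _ (mul_geom_sum_inv_smul (pow_ne_zero _ hq₀) hpow)

theorem K_mul_Kh_pow_half_mul_oneJ (hn : n ≠ 0) (heven : Even n) {j : ℕ} (hj : j ≤ 1) :
    K k n q * Kh k n q ^ (n / 2) * oneJ k n q j = (-1 : k) ^ j • oneJ k n q j := by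
  have hpow : (((-1 : k) ^ j)⁻¹ • (K k n q * Kh k n q ^ (n / 2))) ^ 2 = 1 := by
    rw [smul_pow, K_mul_Kh_pow_half_sq hn heven, inv_pow, pow_right_comm, neg_one_sq, one_pow,
      inv_one, one_smul]
  rw [oneJ_eq_smul_geom_sum hj, mul_smul_comm, smul_comm ((-1 : k) ^ j)]
  exact congrArg _ (mul_geom_sum_inv_smul (pow_ne_zero j (neg_ne_zero.mpr one_ne_zero)) hpow)

theorem commute_K_mul_Kh_pow_phi (m i : ℕ) :
    Commute (K k n q * Kh k n q ^ m) (phi k n q i) :=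
  (Commute.sum_right _ _ _ fun t _ =>
    ((commute_K_mul_Kh_pow_Kinv_mul_Kh m).pow_right t).smul_right _).smul_right _

theorem Kinv_mul_Kh_mul_eIdem (heven : Even n) (hq₀ : q ≠ 0) (hq : q ^ n ^ 2 = 1) (i j : ℕ) :
    Kinv k n q * Kh k n q * eIdem k n q i j = q ^ (2 * i) • eIdem k n q i j := by
  rw [eIdem, ← mul_assoc, Kinv_mul_Kh_mul_phi heven hq₀ hq, smul_mul_assoc]

theorem K_mul_Kh_pow_half_mul_eIdem (hn : n ≠ 0) (heven : Even n) (i : ℕ) {j : ℕ} (hj : j ≤ 1) :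
    K k n q * Kh k n q ^ (n / 2) * eIdem k n q i j = (-1 : k) ^ j • eIdem k n q i j := by
  rw [eIdem, ← mul_assoc, (commute_K_mul_Kh_pow_phi _ i).eq, mul_assoc,
    K_mul_Kh_pow_half_mul_oneJ hn heven hj, mul_smul_comm]

theorem Kinv_mul_Kh_mul_alpha (hn : n ≠ 0) (heven : Even n) (hq : q ^ n ^ 2 = 1) (i j : ℕ) :
    Kinv k n q * Kh k n q * alpha k n q i j = q ^ (2 * (i : ℤ) - 2) • alpha k n q i j := by
  have hn2 : n ^ 2 ≠ 0 := pow_ne_zero 2 hn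
  have hq₀ : q ≠ 0 := (IsUnit.of_pow_eq_one hq hn2).ne_zero
  have hpow : (q ^ 2) ^ (n ^ 2 - 1) = (q ^ 2)⁻¹ :=
    eq_inv_of_mul_eq_one_left <| by rw [pow_sub_one_mul hn2, pow_right_comm, hq, one_pow]
  have hscalar : (q ^ 2) ^ (n ^ 2 - 1) * q ^ (2 * i) = q ^ (2 * (i : ℤ) - 2) := by
    rw [hpow, zpow_sub₀ hq₀, div_eq_inv_mul]
    norm_cast
  rw [← hscalar]
  exact ((skewCommute_Kinv_mul_Kh_F hn hq).pow_right _).smul_smul_eq (V := U k n q)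
    (Kinv_mul_Kh_mul_eIdem heven hq₀ hq i j)

theorem K_mul_Kh_pow_half_mul_alpha (hn : n ≠ 0) (heven : Even n)
    (hq : IsPrimitiveRoot q (n ^ 2)) (i : ℕ) {j : ℕ} (hj : j ≤ 1) :
    K k n q * Kh k n q ^ (n / 2) * alpha k n q i j = (-1 : k) ^ (1 + j) • alpha k n q i j := by
  have hodd : Odd (n ^ 2 - 1) :=
    Nat.Even.sub_odd (Nat.pos_of_ne_zero (pow_ne_zero 2 hn)) (heven.pow_of_ne_zero two_ne_zero)
      odd_one
  have hscalar : (-1 : k) ^ (n ^ 2 - 1) * (-1) ^ j = (-1) ^ (1 + j) := by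
    rw [hodd.neg_one_pow, pow_add, pow_one]
  rw [← hscalar]
  exact ((skewCommute_K_mul_Kh_pow_half_F hn heven hq).pow_right _).smul_smul_eq (V := U k n q)
    (K_mul_Kh_pow_half_mul_eIdem hn heven i hj)

theorem F_mul_alpha (hn : n ≠ 0) (i j : ℕ) : F k n q * alpha k n q i j = 0 := by
  rw [alpha, ← mul_assoc, mul_pow_sub_one (pow_ne_zero 2 hn), F_pow_eq_zero, zero_mul]

theorem Kinv_mul_Kh_mul_E_pow_mul_alpha (hn : n ≠ 0) (heven : Even n) (hq : q ^ n ^ 2 = 1)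
    (i j s : ℕ) :
    Kinv k n q * Kh k n q * (E k n q ^ s * alpha k n q i j) =
      q ^ (2 * (i : ℤ) - 2 - 2 * (s : ℤ)) • (E k n q ^ s * alpha k n q i j) := by
  have hq₀ : q ≠ 0 := (IsUnit.of_pow_eq_one hq (pow_ne_zero 2 hn)).ne_zero
  have hscalar : (q⁻¹ ^ 2) ^ s * q ^ (2 * (i : ℤ) - 2) =
      q ^ (2 * (i : ℤ) - 2 - 2 * (s : ℤ)) := by
    rw [zpow_sub₀ hq₀ _ (2 * (s : ℤ)), div_eq_inv_mul, inv_pow, inv_pow, ← pow_mul]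
    norm_cast
  rw [← hscalar]
  exact ((skewCommute_Kinv_mul_Kh_E hn hq).pow_right s).smul_smul_eq (V := U k n q)
    (Kinv_mul_Kh_mul_alpha hn heven hq i j)

theorem K_mul_Kh_pow_half_mul_E_pow_mul_alpha (hn : n ≠ 0) (heven : Even n)
    (hq : IsPrimitiveRoot q (n ^ 2)) (i : ℕ) {j : ℕ} (hj : j ≤ 1) (s : ℕ) :
    K k n q * Kh k n q ^ (n / 2) * (E k n q ^ s * alpha k n q i j) =
      (-1 : k) ^ (s + 1 + j) • (E k n q ^ s * alpha k n q i j) := by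
  rw [add_assoc, pow_add]
  exact ((skewCommute_K_mul_Kh_pow_half_E hn heven hq).pow_right s).smul_smul_eq (V := U k n q)
    (K_mul_Kh_pow_half_mul_alpha hn heven hq i hj)

theorem F_mul_E_pow_succ_mul_alpha (hn : n ≠ 0) (heven : Even n) (hq : q ^ n ^ 2 = 1)
    (i j s : ℕ) :
    F k n q * (E k n q ^ (s + 1) * alpha k n q i j) =
      (gauss k q⁻¹ (s + 1) * (1 - q ^ (2 * (i : ℤ) - 2 - (s : ℤ)))) •
        (E k n q ^ s * alpha k n q i j) := by
  have hq₀ : q ≠ 0 := (IsUnit.of_pow_eq_one hq (pow_ne_zero 2 hn)).ne_zero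
  have hscalar : q ^ (2 * (i : ℤ) - 2) * q⁻¹ ^ s = q ^ (2 * (i : ℤ) - 2 - (s : ℤ)) := by
    rw [zpow_sub₀ hq₀ _ (s : ℤ), zpow_natCast, inv_pow, div_eq_mul_inv]
  rw [← hscalar]
  exact smul_pow_succ_smul_of_smul_eq_zero (V := U k n q) (F_mul_E_sub k n q)
    (skewCommute_Kinv_mul_Kh_E hn hq) (Kinv_mul_Kh_mul_alpha hn heven hq i j) (F_mul_alpha hn i j) s

end Eigenvectors

end QFL

open QFL in
theorem statement2_general (k : Type) [Field k] (n : ℕ) (hn : n ≠ 0) (heven : Even n) (q : k)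
    (hq : IsPrimitiveRoot q (n ^ 2)) (i j s : ℕ) (hj : j ≤ 1) :
    (Kinv k n q * Kh k n q) * (E k n q ^ s * alpha k n q i j) =
        (q ^ (2 * (i : ℤ) - 2 - 2 * (s : ℤ))) • (E k n q ^ s * alpha k n q i j) ∧
      (K k n q * Kh k n q ^ (n / 2)) * (E k n q ^ s * alpha k n q i j) =
        ((-1 : k) ^ (s + 1 + j)) • (E k n q ^ s * alpha k n q i j) ∧
      (1 ≤ s → F k n q * (E k n q ^ s * alpha k n q i j) =
        (gauss k q⁻¹ s * (1 - q ^ (2 * (i : ℤ) - 1 - (s : ℤ)))) •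
          (E k n q ^ (s - 1) * alpha k n q i j)) := by
  refine ⟨Kinv_mul_Kh_mul_E_pow_mul_alpha hn heven hq.pow_eq_one i j s,
    K_mul_Kh_pow_half_mul_E_pow_mul_alpha hn heven hq i hj s, fun hs => ?_⟩
  obtain ⟨t, rfl⟩ := Nat.exists_eq_add_of_le' hs
  have hexp : 2 * (i : ℤ) - 1 - ((t + 1 : ℕ) : ℤ) = 2 * (i : ℤ) - 2 - (t : ℤ) := by
    push_cast
    ring
  rw [hexp, Nat.add_sub_cancel]
  exact F_mul_E_pow_succ_mul_alpha hn heven hq.pow_eq_one i j t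

open QFL in
/-- Eigenvalue and lowering identities for the vectors `E^s α_{2i,j}` (Corollary 2.6). -/
theorem statement2 (k : Type) [Field k] [IsAlgClosed k] [CharZero k]
    (n : ℕ) (hn : 0 < n) (h4 : 4 ∣ n) (q : k) (hq : IsPrimitiveRoot q (n ^ 2)) :
    ∀ i j s : ℕ, 1 ≤ i → i ≤ n ^ 2 / 2 → j ≤ 1 → s ≤ n ^ 2 - 1 →
      (Kinv k n q * Kh k n q) * (E k n q ^ s * alpha k n q i j) =
        (q ^ (2 * (i : ℤ) - 2 - 2 * (s : ℤ))) • (E k n q ^ s * alpha k n q i j) ∧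
      (K k n q * Kh k n q ^ (n / 2)) * (E k n q ^ s * alpha k n q i j) =
        ((-1 : k) ^ (s + 1 + j)) • (E k n q ^ s * alpha k n q i j) ∧
      (1 ≤ s → F k n q * (E k n q ^ s * alpha k n q i j) =
        (gauss k q⁻¹ s * (1 - q ^ (2 * (i : ℤ) - 1 - (s : ℤ)))) •
          (E k n q ^ (s - 1) * alpha k n q i j)) := fun i j s _ _ hj _ =>
  statement2_general k n hn.ne' (even_iff_two_dvd.mpr (dvd_of_mul_right_dvd (a := 2) (b := 2) h4))
    q hq i j s hj
end
end
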